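/- Let k ≥ 1. Suppose F : D × 𝕏 → 𝕐 and F̄ : D × 𝕏 → 𝕐̄ are continuous, uniformly Lipschitz in 𝕏, and k-times continuously Fréchet differentiable in all variables (jointly in (u,ū) and the 𝕏-argument). If U₀ ∈ C^k([0,ū_*]; 𝕐) and Ū₀ ∈ C^k([0,u_*]; 𝕐̄), then the unique solution (U,Ū) of the two-variable ODE system with data (F, F̄, U₀, Ū₀) satisfies (U,Ū) ∈ C^k(D; 𝕏), and moreover the maps ∂U/∂u : D → 𝕐 and ∂Ū/∂ū : D → 𝕐̄ also belong to C^k(D; 𝕐) and C^k(D; 𝕐̄) respectively. -/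

import Mathlib

open Set

/-- The domain `D = [0,u_*] × [0,ū_*] ⊆ ℝ²`. -/
def Dset (us ubs : ℝ) : Set (ℝ × ℝ) := Set.Icc 0 us ×ˢ Set.Icc 0 ubs

/-- `(U, Ū)` solves the two-variable ODE system with data `(F, F̄, U₀, Ū₀)` on `D`. -/
def IsSolution {Y Yb : Type*} [NormedAddCommGroup Y] [NormedSpace ℝ Y]
    [NormedAddCommGroup Yb] [NormedSpace ℝ Yb]
    (us ubs : ℝ)
    (F : ℝ → ℝ → Y × Yb → Y) (Fb : ℝ → ℝ → Y × Yb → Yb)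
    (U₀ : ℝ → Y) (Ub₀ : ℝ → Yb)
    (U : ℝ × ℝ → Y) (Ub : ℝ × ℝ → Yb) : Prop :=
  ContinuousOn U (Dset us ubs) ∧ ContinuousOn Ub (Dset us ubs) ∧
  (∀ p ∈ Dset us ubs,
    HasDerivWithinAt (fun t => U (t, p.2)) (F p.1 p.2 (U p, Ub p)) (Set.Icc 0 us) p.1) ∧
  (∀ p ∈ Dset us ubs,
    HasDerivWithinAt (fun v => Ub (p.1, v)) (Fb p.1 p.2 (U p, Ub p)) (Set.Icc 0 ubs) p.2) ∧
  (∀ ub ∈ Set.Icc (0:ℝ) ubs, U (0, ub) = U₀ ub) ∧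
  (∀ u ∈ Set.Icc (0:ℝ) us, Ub (u, 0) = Ub₀ u)

/-!
Fix `Ū` and read the first equation as an ordinary differential equation in `u` for `U`, with
parameter `ū`. Formally, `∂U/∂ū` solves the equation obtained by differentiating in `ū`: it is
linear, so it has a global solution `W`, and Grönwall's inequality applied to
`U (u, ū + h) - U (u, ū) - W (u, ū) h` shows that `W` is indeed `∂U/∂ū`. Its coefficients involve
`DF` along the solution and `∂Ū/∂ū = F̄`, both of the class already known for `(U, Ū)`. Since `W`
solves an equation of the same type, it inherits this class by induction, as does `∂U/∂u = F`, and
`U` is one degree more regular. By symmetry so is `Ū`.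
-/

section Picard

open scoped NNReal

variable {P Y : Type*} [TopologicalSpace P] [CompactSpace P]
  [NormedAddCommGroup Y] [NormedSpace ℝ Y]
  {f : ℝ → P → Y → Y} {a b : ℝ} {K c : ℝ≥0}

/-- The Picard operator of `y' = f s p y`, `y a = y₀ p`, with parameter `p`, acting on continuous
functions of time and parameter and conjugated by the Bielecki weight `exp (c * s)`: if `W` is a
family of solutions, then `(s, p) ↦ exp (-(c * s)) • W (s, p)` is a fixed point. The weight makes
the operator a contraction on all of `[a, b]`, however long, as soon as `c` exceeds the Lipschitz
constant of `f`. -/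
noncomputable def weightedPicard (hab : a ≤ b)
    (hf : Continuous fun q : ℝ × P × Y => f q.1 q.2.1 q.2.2) (y₀ : C(P, Y)) (c : ℝ≥0)
    (w : C(Icc a b × P, Y)) : C(Icc a b × P, Y) where
  toFun q := Real.exp (-(c * q.1)) • ODE.picard (fun s => f s q.2) a (y₀ q.2)
    (fun s => Real.exp (c * s) • w (projIcc a b hab s, q.2)) q.1
  continuous_toFun := by
    have hint : Continuous fun q : (Icc a b × P) × ℝ =>
        f q.2 q.1.2 (Real.exp (c * q.2) • w (projIcc a b hab q.2, q.1.2)) := by fun_prop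
    exact Continuous.smul (by fun_prop) ((by fun_prop : Continuous _).add
      (intervalIntegral.continuous_parametric_intervalIntegral_of_continuous hint (by fun_prop)))

lemma lipschitzWith_weightedPicard {hab : a ≤ b}
    {hf : Continuous fun q : ℝ × P × Y => f q.1 q.2.1 q.2.2} (y₀ : C(P, Y))
    (hlip : ∀ s p, LipschitzWith K (f s p)) (hc : 0 < c) :
    LipschitzWith (K / c) (weightedPicard hab hf y₀ c) := by
  refine LipschitzWith.of_dist_le_mul fun w₁ w₂ => ?_
  rw [ContinuousMap.dist_le (by positivity)]
  rintro ⟨⟨t, ht⟩, p⟩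
  have hcont (w : C(Icc a b × P, Y)) :
      Continuous fun s => f s p (Real.exp (c * s) • w (projIcc a b hab s, p)) := by fun_prop
  have hpoint (s : ℝ) : ‖f s p (Real.exp (c * s) • w₁ (projIcc a b hab s, p)) -
      f s p (Real.exp (c * s) • w₂ (projIcc a b hab s, p))‖ ≤
      K * dist w₁ w₂ * Real.exp (c * s) := by
    rw [← dist_eq_norm]
    refine ((hlip s p).dist_le_mul _ _).trans ?_
    rw [dist_smul₀, Real.norm_of_nonneg (Real.exp_pos _).le, mul_assoc, mul_comm (dist w₁ w₂)]
    gcongr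
    exact ContinuousMap.dist_apply_le_dist _
  have hexp : ∫ s in a..t, Real.exp (c * s) ≤ Real.exp (c * t) / c := by
    rw [intervalIntegral.integral_comp_mul_left _ (NNReal.coe_ne_zero.2 hc.ne'), integral_exp,
      smul_eq_mul, inv_mul_eq_div]
    gcongr
    linarith [Real.exp_pos (c * a)]
  simp only [weightedPicard, ContinuousMap.coe_mk, ODE.picard_apply]
  rw [dist_smul₀, dist_add_left, dist_eq_norm, Real.norm_of_nonneg (Real.exp_pos _).le,
    ← intervalIntegral.integral_sub ((hcont w₁).intervalIntegrable _ _)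
      ((hcont w₂).intervalIntegrable _ _)]
  calc _ ≤ Real.exp (-(c * t)) * ∫ s in a..t, K * dist w₁ w₂ * Real.exp (c * s) := by
        gcongr
        exact intervalIntegral.norm_integral_le_of_norm_le ht.1
          (.of_forall fun s _ => hpoint s) (Continuous.intervalIntegrable (by fun_prop) _ _)
    _ ≤ Real.exp (-(c * t)) * (K * dist w₁ w₂ * (Real.exp (c * t) / c)) := by
        rw [intervalIntegral.integral_const_mul]
        gcongr
    _ = (K / c : ℝ≥0) * dist w₁ w₂ := by
        rw [NNReal.coe_div, Real.exp_neg]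
        field_simp

theorem exists_continuous_family_hasDerivWithinAt [CompleteSpace Y] (hab : a ≤ b)
    (hf : Continuous fun q : ℝ × P × Y => f q.1 q.2.1 q.2.2)
    (hlip : ∀ s p, LipschitzWith K (f s p)) (y₀ : C(P, Y)) :
    ∃ W : Icc a b × P → Y, Continuous W ∧ (∀ p, W (⟨a, left_mem_Icc.2 hab⟩, p) = y₀ p) ∧
      ∀ q, HasDerivWithinAt (fun s => W (projIcc a b hab s, q.2)) (f q.1 q.2 (W q))
        (Icc a b) q.1 := by
  have hcontr : ContractingWith (K / (K + 1)) (weightedPicard hab hf y₀ (K + 1)) :=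
    ⟨(div_lt_one (by positivity)).2 (lt_add_one K),
      lipschitzWith_weightedPicard y₀ hlip (by positivity)⟩
  obtain ⟨w, hw⟩ : ∃ w, weightedPicard hab hf y₀ (K + 1) w = w :=
    have : Nonempty C(Icc a b × P, Y) := ⟨0⟩
    ⟨_, hcontr.fixedPoint_isFixedPt⟩
  let W : Icc a b × P → Y := fun q => Real.exp ((K + 1 : ℝ≥0) * q.1) • w q
  have hW (q : Icc a b × P) : W q =
      ODE.picard (fun s => f s q.2) a (y₀ q.2) (fun s => Real.exp ((K + 1 : ℝ≥0) * s) •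
        w (projIcc a b hab s, q.2)) q.1 := by
    simp only [W]
    conv_lhs => rw [← hw]
    simp only [weightedPicard, ContinuousMap.coe_mk]
    rw [smul_smul, ← Real.exp_add, add_neg_cancel, Real.exp_zero, one_smul]
  refine ⟨W, by fun_prop, fun p => by rw [hW, ODE.picard_apply₀], fun q => ?_⟩
  have hderiv := ODE.hasDerivWithinAt_picard_Icc (f := fun s => f s q.2) (u := univ)
    (α := fun s => Real.exp ((K + 1 : ℝ≥0) * s) • w (projIcc a b hab s, q.2)) (left_mem_Icc.2 hab)
    (by unfold Function.uncurry; fun_prop) (by fun_prop) (fun _ _ => mem_univ _) (y₀ q.2) q.1.2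
  simp only [projIcc_val] at hderiv
  refine hderiv.congr_of_mem (fun s hs => ?_) q.1.2
  rw [hW, projIcc_of_mem hab hs]

end Picard

section ODEFamily

open scoped NNReal

variable {X Y : Type*} [TopologicalSpace X] [NormedAddCommGroup Y] [NormedSpace ℝ Y]

/-- `U` is a family of solutions on `[a, b]` of the ordinary differential equations
`∂U/∂s (s, x) = G ((s, x), U (s, x))` with parameter `x ∈ t`, jointly continuous in time and
parameter. Differentiability in `s` is one-sided at the endpoints. -/
structure IsODEFamily (a b : ℝ) (t : Set X) (G : (ℝ × X) × Y → Y) (U : ℝ × X → Y) : Prop where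
  continuousOn : ContinuousOn U (Icc a b ×ˢ t)
  hasDerivWithinAt : ∀ p ∈ Icc a b ×ˢ t,
    HasDerivWithinAt (fun s => U (s, p.2)) (G (p, U p)) (Icc a b) p.1

theorem exists_isODEFamily [CompleteSpace Y] {a b : ℝ} {t : Set X} {K : ℝ≥0}
    {G : (ℝ × X) × Y → Y} {y₀ : X → Y} (hab : a ≤ b) (ht : IsCompact t)
    (hG : ContinuousOn G ((Icc a b ×ˢ t) ×ˢ univ))
    (hlip : ∀ p ∈ Icc a b ×ˢ t, LipschitzWith K fun y => G (p, y)) (hy₀ : ContinuousOn y₀ t) :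
    ∃ W, IsODEFamily a b t G W ∧ ∀ x ∈ t, W (a, x) = y₀ x := by
  classical
  have : CompactSpace t := isCompact_iff_compactSpace.1 ht
  obtain ⟨W, hWc, hW₀, hW⟩ := exists_continuous_family_hasDerivWithinAt
    (f := fun s (x : t) y => G ((projIcc a b hab s, x), y)) hab
    (hG.comp_continuous (by fun_prop) fun q => ⟨⟨Subtype.prop _, q.2.1.2⟩, mem_univ _⟩)
    (fun s x => hlip _ ⟨Subtype.prop _, x.2⟩) ⟨t.domRestrict y₀, hy₀.domRestrict⟩
  let W' : ℝ × X → Y := fun p =>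
    if hp : p.2 ∈ t then W (projIcc a b hab p.1, ⟨p.2, hp⟩) else 0
  have hW' (s : ℝ) {x : X} (hx : x ∈ t) : W' (s, x) = W (projIcc a b hab s, ⟨x, hx⟩) := dif_pos hx
  refine ⟨W', ⟨?_, ?_⟩, fun x hx => ?_⟩
  · rw [continuousOn_iff_continuous_domRestrict]
    have hrestrict : (Icc a b ×ˢ t).domRestrict W' =
        fun q => W (projIcc a b hab q.1.1, ⟨q.1.2, q.2.2⟩) :=
      funext fun q => hW' _ q.2.2
    rw [hrestrict]
    fun_prop
  · rintro ⟨s, x⟩ ⟨hs, hx⟩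
    simpa only [hW' _ hx, projIcc_val, projIcc_of_mem hab hs] using hW (⟨s, hs⟩, ⟨x, hx⟩)
  · rw [hW' a hx, projIcc_left]
    exact hW₀ ⟨x, hx⟩

end ODEFamily

section ContDiffOn

variable {X E Y Z : Type*} [NormedAddCommGroup X] [NormedSpace ℝ X]
  [NormedAddCommGroup E] [NormedSpace ℝ E] [NormedAddCommGroup Y] [NormedSpace ℝ Y]
  [NormedAddCommGroup Z] [NormedSpace ℝ Z] {n : WithTop ℕ∞} {S : Set X}

lemma contDiffOn_comp_graph {H : X × Y → Z} {U : X → Y} (hH : ContDiffOn ℝ n H (S ×ˢ univ))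
    (hU : ContDiffOn ℝ n U S) : ContDiffOn ℝ n (fun x => H (x, U x)) S :=
  hH.comp (contDiffOn_id.prodMk hU) fun _ hx => ⟨hx, mem_univ _⟩

lemma contDiffOn_comp_swap {h : X × Y → Z} {T : Set Y} (hh : ContDiffOn ℝ n h (S ×ˢ T)) :
    ContDiffOn ℝ n (fun p => h p.swap) (T ×ˢ S) :=
  hh.comp (contDiff_snd.prodMk contDiff_fst).contDiffOn fun _ hp => ⟨hp.2, hp.1⟩

lemma contDiffOn_toSpanSingleton {f : X → Y} (hf : ContDiffOn ℝ n f S) :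
    ContDiffOn ℝ n (fun x => ContinuousLinearMap.toSpanSingleton ℝ (f x)) S :=
  (ContinuousLinearMap.toSpanSingletonCLE (𝕜 := ℝ) (E := Y)).contDiff.comp_contDiffOn hf

lemma contDiffOn_clm_prod {f : X → E →L[ℝ] Y} {g : X → E →L[ℝ] Z} (hf : ContDiffOn ℝ n f S)
    (hg : ContDiffOn ℝ n g S) : ContDiffOn ℝ n (fun x => (f x).prod (g x)) S :=
  (ContinuousLinearMap.prodₗᵢ (𝕜 := ℝ) (E := E) (F := Y) (G := Z) ℝ).contDiff.comp_contDiffOn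
    (hf.prodMk hg)

end ContDiffOn

section SliceDerivative

open scoped Topology

variable {T E Y Z : Type*} [NormedAddCommGroup E] [NormedSpace ℝ E]
  [NormedAddCommGroup Y] [NormedSpace ℝ Y] [NormedAddCommGroup Z]

theorem eventually_forall_mem_segment_norm_sub_le [TopologicalSpace T] {s : Set T} {t : Set E}
    {H : (T × E) × Y → Z} (hH : ContinuousOn H ((s ×ˢ t) ×ˢ univ)) (hs : IsCompact s)
    (ht : Convex ℝ t) {U : T × E → Y} (hU : ContinuousOn U (s ×ˢ t)) {v : E} (hv : v ∈ t)
    {ε : ℝ} (hε : 0 < ε) :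
    ∀ᶠ x in 𝓝[t] v, ∀ τ ∈ s, ∀ q ∈ segment ℝ (v, U (τ, v)) (x, U (τ, x)),
      ‖H ((τ, q.1), q.2) - H ((τ, v), U (τ, v))‖ ≤ ε := by
  let γ (x : E) (z : T × ℝ) : E × Y := AffineMap.lineMap (v, U (z.1, v)) (x, U (z.1, x)) z.2
  have hγmem {x : E} (hx : x ∈ t) (τ : T) {r : ℝ} (hr : r ∈ Icc (0 : ℝ) 1) :
      γ x (τ, r) ∈ t ×ˢ (univ : Set Y) :=
    (ht.prod convex_univ).lineMap_mem (mk_mem_prod hv (mem_univ _))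
      (mk_mem_prod hx (mem_univ _)) hr
  have hγ : ContinuousOn (Function.uncurry γ) (t ×ˢ s ×ˢ Icc (0 : ℝ) 1) := by
    simp only [γ, Function.uncurry_def, AffineMap.lineMap_apply_module]
    refine ((continuousOn_const.sub continuousOn_snd.snd).smul
      (continuousOn_const.prodMk (hU.comp (by fun_prop) fun q hq => ⟨hq.2.1, hv⟩))).add
      (continuousOn_snd.snd.smul
        (continuousOn_fst.prodMk (hU.comp (by fun_prop) fun q hq => ⟨hq.2.1, hq.1⟩)))
  have hHγ : ContinuousOn (Function.uncurry fun x z => H ((z.1, (γ x z).1), (γ x z).2))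
      (t ×ˢ s ×ˢ Icc (0 : ℝ) 1) :=
    hH.comp (f := fun q : E × T × ℝ => ((q.2.1, (γ q.1 q.2).1), (γ q.1 q.2).2))
      ((continuousOn_snd.fst.prodMk hγ.fst).prodMk hγ.snd)
      fun q hq => ⟨⟨hq.2.1, (hγmem hq.1 q.2.1 hq.2.2).1⟩, mem_univ _⟩
  obtain ⟨N, hN, hclose⟩ := (hs.prod isCompact_Icc).mem_uniformity_of_prod hHγ hv
    (Metric.dist_mem_uniformity hε)
  filter_upwards [hN] with x hxN τ hτ q hq
  rw [segment_eq_image_lineMap] at hq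
  obtain ⟨r, hr, rfl⟩ := hq
  have hlt := hclose x hxN (τ, r) ⟨hτ, hr⟩
  simp only [γ, AffineMap.lineMap_same, AffineMap.const_apply, mem_ofPred_eq, dist_eq_norm] at hlt
  exact hlt.le

variable [NormedSpace ℝ Z]

/-- At every `(p, y)` with `p ∈ s ×ˢ t`, the continuous linear map `G' (p, y)` is the Fréchet
derivative of `G` in all variables except time, the first coordinate of `p`. No regularity of `G`
in time is asked for. -/
def HasSliceFDerivOn (s : Set T) (t : Set E) (G : (T × E) × Y → Z)
    (G' : (T × E) × Y → E × Y →L[ℝ] Z) : Prop :=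
  ∀ p ∈ s ×ˢ t, ∀ y, HasFDerivWithinAt (fun x : E × Y => G ((p.1, x.1), x.2)) (G' (p, y))
    (t ×ˢ univ) (p.2, y)

variable {s : Set T} {t : Set E} {G : (T × E) × Y → Z} {G' : (T × E) × Y → E × Y →L[ℝ] Z}

theorem HasSliceFDerivOn.eventually_forall_norm_sub_sub_le [TopologicalSpace T]
    (hG : HasSliceFDerivOn s t G G') (hG' : ContinuousOn G' ((s ×ˢ t) ×ˢ univ))
    (hs : IsCompact s) (ht : Convex ℝ t) {U : T × E → Y} (hU : ContinuousOn U (s ×ˢ t))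
    {v : E} (hv : v ∈ t) {ε : ℝ} (hε : 0 < ε) :
    ∀ᶠ x in 𝓝[t] v, ∀ τ ∈ s,
      ‖G ((τ, x), U (τ, x)) - G ((τ, v), U (τ, v)) -
        G' ((τ, v), U (τ, v)) (x - v, U (τ, x) - U (τ, v))‖ ≤
      ε * ‖(x - v, U (τ, x) - U (τ, v))‖ := by
  filter_upwards [eventually_forall_mem_segment_norm_sub_le hG' hs ht hU hv hε,
    self_mem_nhdsWithin] with x hclose hx τ hτ
  have hseg : segment ℝ (v, U (τ, v)) (x, U (τ, x)) ⊆ t ×ˢ univ :=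
    (ht.prod convex_univ).segment_subset (mk_mem_prod hv (mem_univ _))
      (mk_mem_prod hx (mem_univ _))
  exact (convex_segment _ _).norm_image_sub_le_of_norm_hasFDerivWithin_le'
    (f := fun q => G ((τ, q.1), q.2)) (f' := fun q => G' ((τ, q.1), q.2))
    (fun q hq => (hG (τ, q.1) ⟨hτ, (hseg hq).1⟩ q.2).mono hseg) (hclose τ hτ)
    (left_mem_segment ℝ _ _) (right_mem_segment ℝ _ _)

theorem exists_hasSliceFDerivOn_of_contDiffOn [NormedAddCommGroup T] [NormedSpace ℝ T]
    {n : WithTop ℕ∞} (hG : ContDiffOn ℝ (n + 1) G ((s ×ˢ t) ×ˢ univ))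
    (hs : UniqueDiffOn ℝ s) (ht : UniqueDiffOn ℝ t) :
    ∃ G', HasSliceFDerivOn s t G G' ∧ ContDiffOn ℝ n G' ((s ×ˢ t) ×ˢ univ) := by
  obtain ⟨-, DG, hDG, hDer⟩ := (contDiffOn_succ_iff_hasFDerivWithinAt_of_uniqueDiffOn
    ((hs.prod ht).prod uniqueDiffOn_univ)).1 hG
  let ι : E × Y →L[ℝ] (T × E) × Y := ((0 : E × Y →L[ℝ] T).prod (.fst ℝ E Y)).prod (.snd ℝ E Y)
  refine ⟨fun q => DG q ∘SL ι, fun p hp y => ?_, hDG.clm_comp contDiffOn_const⟩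
  have hslice : HasFDerivWithinAt (fun x : E × Y => ((p.1, x.1), x.2)) ι (t ×ˢ univ) (p.2, y) :=
    ((hasFDerivWithinAt_const _ _ _).prodMk hasFDerivWithinAt_fst).prodMk hasFDerivWithinAt_snd
  exact (hDer (p, y) ⟨hp, mem_univ y⟩).comp (p.2, y) hslice
    fun x hx => mk_mem_prod (mk_mem_prod hp.1 hx.1) (mem_univ x.2)

theorem HasSliceFDerivOn.comp_prodMk {X : Type*} [NormedAddCommGroup X] [NormedSpace ℝ X]
    {Φ : (T × E) × Y × X → Z} {Φ' : (T × E) × Y × X → E × Y × X →L[ℝ] Z}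
    {V : T × E → X} {V' : T × E → E →L[ℝ] X} (hΦ : HasSliceFDerivOn s t Φ Φ')
    (hV : ∀ p ∈ s ×ˢ t, HasFDerivWithinAt (fun x => V (p.1, x)) (V' p) t p.2) :
    HasSliceFDerivOn s t (fun q : (T × E) × Y => Φ (q.1, q.2, V q.1)) fun q =>
      Φ' (q.1, q.2, V q.1) ∘SL (ContinuousLinearMap.fst ℝ E Y).prod
        ((ContinuousLinearMap.snd ℝ E Y).prod (V' q.1 ∘SL .fst ℝ E Y)) := by
  intro p hp y
  have hVfst : HasFDerivWithinAt (fun x : E × Y => V (p.1, x.1)) (V' p ∘SL .fst ℝ E Y)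
      (t ×ˢ univ) (p.2, y) :=
    (hV p hp).comp (f := Prod.fst) (s := t ×ˢ (univ : Set Y)) (p.2, y) hasFDerivWithinAt_fst
      fun x hx => hx.1
  exact (hΦ p hp (y, V p)).comp (f := fun x : E × Y => (x.1, x.2, V (p.1, x.1))) (p.2, y)
    (hasFDerivWithinAt_fst.prodMk (hasFDerivWithinAt_snd.prodMk hVfst))
    fun x hx => mk_mem_prod hx.1 (mem_univ (x.2, V (p.1, x.1)))

end SliceDerivative

section PartialDerivatives

open Filter
open scoped Topology

variable {E₁ E₂ Y : Type*} [NormedAddCommGroup E₁] [NormedSpace ℝ E₁]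
  [NormedAddCommGroup E₂] [NormedSpace ℝ E₂] [NormedAddCommGroup Y] [NormedSpace ℝ Y]
  {s : Set E₁} {t : Set E₂} {f : E₁ × E₂ → Y}
  {f₁ : E₁ × E₂ → E₁ →L[ℝ] Y} {f₂ : E₁ × E₂ → E₂ →L[ℝ] Y}

theorem hasFDerivWithinAt_coprod_of_partial {f₂' : E₂ →L[ℝ] Y} (hs : Convex ℝ s) {p : E₁ × E₂}
    (hp : p ∈ s ×ˢ t)
    (hf₁ : ∀ q ∈ s ×ˢ t, HasFDerivWithinAt (fun x => f (x, q.2)) (f₁ q) s q.1)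
    (hf₁c : ContinuousWithinAt f₁ (s ×ˢ t) p)
    (hf₂ : HasFDerivWithinAt (fun y => f (p.1, y)) f₂' t p.2) :
    HasFDerivWithinAt f ((f₁ p).coprod f₂') (s ×ˢ t) p := by
  have hvert : (fun q : E₁ × E₂ => f (p.1, q.2) - f p - f₂' (q.2 - p.2)) =o[𝓝[s ×ˢ t] p]
      fun q => q - p :=
    ((hasFDerivWithinAt_iff_isLittleO.1 hf₂).comp_tendsto
      (tendsto_snd.mono_left (nhdsWithin_prod_eq ..).le)).trans_isBigO
      (.of_bound' (.of_forall fun q => norm_snd_le (q - p)))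
  have hhor : (fun q : E₁ × E₂ => f q - f (p.1, q.2) - f₁ p (q.1 - p.1)) =o[𝓝[s ×ˢ t] p]
      fun q => q - p := by
    refine Asymptotics.isLittleO_iff.2 fun ε hε => ?_
    obtain ⟨δ, hδ, hclose⟩ := Metric.continuousWithinAt_iff.1 hf₁c ε hε
    filter_upwards [self_mem_nhdsWithin, mem_nhdsWithin_of_mem_nhds (Metric.ball_mem_nhds p hδ)]
      with q hq hqδ
    rw [Metric.mem_ball, Prod.dist_eq, max_lt_iff] at hqδ
    calc _ ≤ ε * ‖q.1 - p.1‖ :=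
          (hs.inter (convex_ball p.1 δ)).norm_image_sub_le_of_norm_hasFDerivWithin_le'
            (f := fun x => f (x, q.2)) (f' := fun x => f₁ (x, q.2))
            (fun x hx => (hf₁ (x, q.2) ⟨hx.1, hq.2⟩).mono inter_subset_left)
            (fun x hx => by
              rw [← dist_eq_norm]
              exact (hclose (x := (x, q.2)) ⟨hx.1, hq.2⟩ (max_lt hx.2 hqδ.2)).le)
            ⟨hp.1, Metric.mem_ball_self hδ⟩ ⟨hq.1, hqδ.1⟩
      _ ≤ ε * ‖q - p‖ := by gcongr; exact norm_fst_le (q - p)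
  refine hasFDerivWithinAt_iff_isLittleO.2 ((hhor.add hvert).congr_left fun q => ?_)
  simp only [ContinuousLinearMap.coprod_apply, Prod.fst_sub, Prod.snd_sub]
  abel

theorem contDiffOn_succ_of_partial {n : ℕ} (hs : Convex ℝ s) (hs' : UniqueDiffOn ℝ s)
    (ht : UniqueDiffOn ℝ t)
    (hf₁ : ∀ p ∈ s ×ˢ t, HasFDerivWithinAt (fun x => f (x, p.2)) (f₁ p) s p.1)
    (hf₂ : ∀ p ∈ s ×ˢ t, HasFDerivWithinAt (fun y => f (p.1, y)) (f₂ p) t p.2)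
    (hf₁n : ContDiffOn ℝ n f₁ (s ×ˢ t)) (hf₂n : ContDiffOn ℝ n f₂ (s ×ˢ t)) :
    ContDiffOn ℝ (n + 1) f (s ×ˢ t) := by
  refine (contDiffOn_succ_iff_hasFDerivWithinAt_of_uniqueDiffOn (hs'.prod ht)).2
    ⟨by simp, fun p => (f₁ p).coprod (f₂ p), ?_, fun p hp =>
      hasFDerivWithinAt_coprod_of_partial hs hp hf₁ (hf₁n.continuousOn p hp) (hf₂ p hp)⟩
  have hcoprod (p : E₁ × E₂) : (f₁ p).coprod (f₂ p) =
      f₁ p ∘SL .fst ℝ E₁ E₂ + f₂ p ∘SL .snd ℝ E₁ E₂ :=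
    (ContinuousLinearMap.comp_fst_add_comp_snd _ _).symm
  simp only [hcoprod]
  exact (hf₁n.clm_comp contDiffOn_const).add (hf₂n.clm_comp contDiffOn_const)

end PartialDerivatives

section Linearization

variable {E Y : Type*} [NormedAddCommGroup E] [NormedSpace ℝ E]
  [NormedAddCommGroup Y] [NormedSpace ℝ Y] {a b : ℝ}

lemma norm_le_mul_gronwallBound {f f' : ℝ → Y} {K ε η : ℝ} (hK : 0 ≤ K) (hε : 0 ≤ ε)
    (hη : 0 ≤ η) (hf : ∀ s ∈ Icc a b, HasDerivWithinAt f (f' s) (Icc a b) s) (ha : ‖f a‖ ≤ η)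
    (hbound : ∀ s ∈ Icc a b, ‖f' s‖ ≤ K * ‖f s‖ + η * ε) {u : ℝ} (hu : u ∈ Icc a b) :
    ‖f u‖ ≤ η * gronwallBound 1 K ε (b - a) := by
  have hscale : gronwallBound η K (η * ε) (u - a) = η * gronwallBound 1 K ε (u - a) := by
    unfold gronwallBound
    split_ifs <;> ring
  calc ‖f u‖ ≤ gronwallBound η K (η * ε) (u - a) :=
        norm_le_gronwallBound_of_norm_deriv_right_le (fun s hs => (hf s hs).continuousWithinAt)
          (fun s hs => (hf s (Ico_subset_Icc_self hs)).mono_of_mem_nhdsWithin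
            (Icc_mem_nhdsGE_of_mem hs))
          ha (fun s hs => hbound s (Ico_subset_Icc_self hs)) u hu
    _ = η * gronwallBound 1 K ε (u - a) := hscale
    _ ≤ η * gronwallBound 1 K ε (b - a) := by
        gcongr
        exact gronwallBound_mono zero_le_one hε hK (by linarith [hu.2])

lemma norm_sub_apply_prodMk_le {L : E × Y →L[ℝ] Y} {w : E →L[ℝ] Y} {h : E} {g d : Y}
    {B C ε : ℝ} (hL : ‖L‖ ≤ C) (hw : ‖w‖ ≤ B) (hε : 0 ≤ ε) (hε₁ : ε ≤ 1)
    (hg : ‖g - L (h, d)‖ ≤ ε * ‖(h, d)‖) :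
    ‖g - L (h, w h)‖ ≤ (C + 1) * ‖d - w h‖ + ε * ‖h‖ * (1 + B) := by
  have hsplit : g - L (h, w h) = (g - L (h, d)) + L (0, d - w h) := by
    rw [show ((0, d - w h) : E × Y) = (h, d) - (h, w h) by simp, map_sub]
    abel
  have hd : ‖(h, d)‖ ≤ ‖h‖ + (‖d - w h‖ + B * ‖h‖) :=
    calc ‖(h, d)‖ ≤ ‖h‖ + ‖d‖ := max_le_add_of_nonneg (norm_nonneg _) (norm_nonneg _)
      _ ≤ ‖h‖ + (‖d - w h‖ + ‖w h‖) := by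
          gcongr
          exact norm_le_norm_sub_add d (w h)
      _ ≤ ‖h‖ + (‖d - w h‖ + B * ‖h‖) := by
          gcongr
          exact w.le_of_opNorm_le hw h
  calc ‖g - L (h, w h)‖ ≤ ε * (‖h‖ + (‖d - w h‖ + B * ‖h‖)) + C * ‖d - w h‖ := by
        rw [hsplit]
        refine norm_add_le_of_le (hg.trans (by gcongr)) ((L.le_of_opNorm_le hL _).trans_eq ?_)
        rw [Prod.norm_mk, norm_zero, max_eq_right (norm_nonneg _)]
    _ ≤ (C + 1) * ‖d - w h‖ + ε * ‖h‖ * (1 + B) := by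
        linarith [mul_le_of_le_one_left (norm_nonneg (d - w h)) hε₁]

variable {t : Set E} {G : (ℝ × E) × Y → Y} {G' : (ℝ × E) × Y → E × Y →L[ℝ] Y} {U : ℝ × E → Y}

theorem IsODEFamily.norm_sub_sub_apply_le_of_linearized (hU : IsODEFamily a b t G U) {v x : E}
    (hv : v ∈ t) (hx : x ∈ t) {L : ℝ → E × Y →L[ℝ] Y} {w : ℝ → E →L[ℝ] Y} {B C ε : ℝ}
    (hL : ∀ s ∈ Icc a b, ‖L s‖ ≤ C) (hw : ∀ s ∈ Icc a b, ‖w s‖ ≤ B) (hε : 0 ≤ ε) (hε₁ : ε ≤ 1)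
    (hG : ∀ s ∈ Icc a b, ‖G ((s, x), U (s, x)) - G ((s, v), U (s, v)) -
      L s (x - v, U (s, x) - U (s, v))‖ ≤ ε * ‖(x - v, U (s, x) - U (s, v))‖)
    (hw' : ∀ s ∈ Icc a b, HasDerivWithinAt w
      (L s ∘SL (ContinuousLinearMap.id ℝ E).prod (w s)) (Icc a b) s)
    (ha : ‖U (a, x) - U (a, v) - w a (x - v)‖ ≤ ε * ‖x - v‖) {u : ℝ} (hu : u ∈ Icc a b) :
    ‖U (u, x) - U (u, v) - w u (x - v)‖ ≤
      ε * ‖x - v‖ * gronwallBound 1 (C + 1) (1 + B) (b - a) := by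
  have hC₀ : 0 ≤ C := (norm_nonneg _).trans (hL u hu)
  have hB₀ : 0 ≤ B := (norm_nonneg _).trans (hw u hu)
  have hderiv (s : ℝ) (hs : s ∈ Icc a b) :
      HasDerivWithinAt (fun s => U (s, x) - U (s, v) - w s (x - v))
        (G ((s, x), U (s, x)) - G ((s, v), U (s, v)) - L s (x - v, w s (x - v))) (Icc a b) s :=
    ((hU.hasDerivWithinAt (s, x) ⟨hs, hx⟩).sub (hU.hasDerivWithinAt (s, v) ⟨hs, hv⟩)).sub
      ((ContinuousLinearMap.apply ℝ Y (x - v)).hasFDerivAt.comp_hasDerivWithinAt s (hw' s hs))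
  exact norm_le_mul_gronwallBound (by positivity) (by positivity) (by positivity) hderiv ha
    (fun s hs => norm_sub_apply_prodMk_le (hL s hs) (hw s hs) hε hε₁ (hG s hs)) hu

theorem IsODEFamily.hasFDerivWithinAt_of_linearized (hU : IsODEFamily a b t G U)
    (ht : Convex ℝ t) (hG : HasSliceFDerivOn (Icc a b) t G G')
    (hG' : ContinuousOn G' ((Icc a b ×ˢ t) ×ˢ univ)) {v : E} (hv : v ∈ t) {w : ℝ → E →L[ℝ] Y}
    (hw : ∀ s ∈ Icc a b, HasDerivWithinAt w
      (G' ((s, v), U (s, v)) ∘SL (ContinuousLinearMap.id ℝ E).prod (w s)) (Icc a b) s)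
    (hwa : HasFDerivWithinAt (fun x => U (a, x)) (w a) t v) {u : ℝ} (hu : u ∈ Icc a b) :
    HasFDerivWithinAt (fun x => U (u, x)) (w u) t v := by
  obtain ⟨C, hC⟩ : ∃ C, ∀ s ∈ Icc a b, ‖G' ((s, v), U (s, v))‖ ≤ C :=
    isCompact_Icc.exists_bound_of_continuousOn <| hG'.comp
      (((by fun_prop : Continuous fun s : ℝ => (s, v)).continuousOn).prodMk
        (hU.continuousOn.comp (by fun_prop) fun s hs => ⟨hs, hv⟩))
      fun s hs => ⟨⟨hs, hv⟩, mem_univ _⟩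
  obtain ⟨B, hB⟩ : ∃ B, ∀ s ∈ Icc a b, ‖w s‖ ≤ B :=
    isCompact_Icc.exists_bound_of_continuousOn fun s hs => (hw s hs).continuousWithinAt
  set M := gronwallBound 1 (C + 1) (1 + B) (b - a)
  have hM : 1 ≤ M := by
    have hC₀ : 0 ≤ C := (norm_nonneg _).trans (hC u hu)
    have hB₀ : 0 ≤ B := (norm_nonneg _).trans (hB u hu)
    have hmono := gronwallBound_mono zero_le_one (by positivity : 0 ≤ 1 + B)
      (by positivity : 0 ≤ C + 1) (sub_nonneg.2 (hu.1.trans hu.2))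
    rwa [gronwallBound_x0] at hmono
  rw [hasFDerivWithinAt_iff_isLittleO, Asymptotics.isLittleO_iff] at hwa ⊢
  intro c hc
  have hε : 0 < min 1 (c / M) := by positivity
  filter_upwards [hG.eventually_forall_norm_sub_sub_le hG' isCompact_Icc ht hU.continuousOn hv hε,
    hwa hε, self_mem_nhdsWithin] with x htaylor hinit hx
  calc ‖U (u, x) - U (u, v) - w u (x - v)‖ ≤ min 1 (c / M) * ‖x - v‖ * M :=
        hU.norm_sub_sub_apply_le_of_linearized hv hx hC hB hε.le (min_le_left _ _) htaylor hw
          hinit hu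
    _ ≤ c / M * ‖x - v‖ * M := by
        gcongr
        exact min_le_right _ _
    _ = c * ‖x - v‖ := by field_simp

end Linearization

section LinearizedFamily

variable {E Y : Type*} [NormedAddCommGroup E] [NormedSpace ℝ E]
  [NormedAddCommGroup Y] [NormedSpace ℝ Y] {a b : ℝ} {t : Set E}
  {G : (ℝ × E) × Y → Y} {G' : (ℝ × E) × Y → E × Y →L[ℝ] Y} {U : ℝ × E → Y}

/-- The right-hand side of the linearized equation `∂W/∂s = D_x G + D_y G ∘ W` along `U`, where
`G'` is the derivative of `G` in parameter and state: it is the equation satisfied by the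
derivative `W` of `U` in the parameter. -/
def linearizedField (G' : (ℝ × E) × Y → E × Y →L[ℝ] Y) (U : ℝ × E → Y)
    (q : (ℝ × E) × (E →L[ℝ] Y)) : E →L[ℝ] Y :=
  G' (q.1, U q.1) ∘SL (ContinuousLinearMap.id ℝ E).prod q.2

lemma lipschitzWith_linearizedField (p : ℝ × E) :
    LipschitzWith ‖G' (p, U p)‖₊ fun w => linearizedField G' U (p, w) := by
  refine LipschitzWith.of_dist_le_mul fun w₁ w₂ => ?_
  have hsub : linearizedField G' U (p, w₁) - linearizedField G' U (p, w₂) =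
      G' (p, U p) ∘SL (0 : E →L[ℝ] E).prod (w₁ - w₂) := by
    ext x
    simp [linearizedField, ← map_sub]
  rw [dist_eq_norm, dist_eq_norm, hsub, coe_nnnorm]
  refine (ContinuousLinearMap.opNorm_comp_le _ _).trans_eq ?_
  rw [ContinuousLinearMap.opNorm_prod, Prod.norm_mk, norm_zero, max_eq_right (norm_nonneg _)]

lemma contDiffOn_linearizedField {n : WithTop ℕ∞} {S : Set (ℝ × E)}
    (hG' : ContDiffOn ℝ n G' (S ×ˢ univ)) (hU : ContDiffOn ℝ n U S) :
    ContDiffOn ℝ n (linearizedField G' U) (S ×ˢ univ) :=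
  ((contDiffOn_comp_graph hG' hU).comp contDiffOn_fst fun _ hq => hq.1).clm_comp
    (contDiffOn_clm_prod contDiffOn_const contDiffOn_snd)

theorem IsODEFamily.exists_isODEFamily_linearizedField [CompleteSpace Y]
    (hU : IsODEFamily a b t G U) (hab : a ≤ b) (ht : Convex ℝ t) (htc : IsCompact t)
    (htd : UniqueDiffOn ℝ t) (hG : HasSliceFDerivOn (Icc a b) t G G')
    (hG' : ContinuousOn G' ((Icc a b ×ˢ t) ×ˢ univ)) {n : WithTop ℕ∞}
    (hUa : ContDiffOn ℝ (n + 1) (fun x => U (a, x)) t) :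
    ∃ W, IsODEFamily a b t (linearizedField G' U) W ∧ ContDiffOn ℝ n (fun x => W (a, x)) t ∧
      ∀ p ∈ Icc a b ×ˢ t, HasFDerivWithinAt (fun x => U (p.1, x)) (W p) t p.2 := by
  obtain ⟨-, w₀, hw₀, hUw₀⟩ := (contDiffOn_succ_iff_hasFDerivWithinAt_of_uniqueDiffOn htd).1 hUa
  obtain ⟨C, hC⟩ : ∃ C, ∀ p ∈ Icc a b ×ˢ t, ‖G' (p, U p)‖ ≤ C :=
    (isCompact_Icc.prod htc).exists_bound_of_continuousOn <|
      hG'.comp (continuousOn_id.prodMk hU.continuousOn) fun p hp => ⟨hp, mem_univ _⟩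
  obtain ⟨W, hW, hWa⟩ := exists_isODEFamily (K := C.toNNReal) hab htc
    (contDiffOn_zero.1 (contDiffOn_linearizedField (contDiffOn_zero.2 hG')
      (contDiffOn_zero.2 hU.continuousOn)))
    (fun p hp => (lipschitzWith_linearizedField p).weaken (NNReal.le_toNNReal_of_coe_le (hC p hp)))
    hw₀.continuousOn
  refine ⟨W, hW, hw₀.congr hWa, fun p hp => ?_⟩
  exact hU.hasFDerivWithinAt_of_linearized (w := fun s => W (s, p.2)) ht hG hG' hp.2
    (fun s hs => hW.hasDerivWithinAt (s, p.2) ⟨hs, hp.2⟩) (hWa p.2 hp.2 ▸ hUw₀ p.2 hp.2) hp.1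

end LinearizedFamily

section Regularity

universe u v

variable {E : Type u} [NormedAddCommGroup E] [NormedSpace ℝ E] {a b : ℝ} {t : Set E}

theorem IsODEFamily.contDiffOn_succ_of_hasFDerivWithinAt {Y : Type*} [NormedAddCommGroup Y]
    [NormedSpace ℝ Y] {G : (ℝ × E) × Y → Y} {U : ℝ × E → Y} {W : ℝ × E → E →L[ℝ] Y} {n : ℕ}
    (hU : IsODEFamily a b t G U) (hab : a < b) (ht : UniqueDiffOn ℝ t)
    (hG : ContDiffOn ℝ n G ((Icc a b ×ˢ t) ×ˢ univ)) (hUn : ContDiffOn ℝ n U (Icc a b ×ˢ t))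
    (hW : ContDiffOn ℝ n W (Icc a b ×ˢ t))
    (hUW : ∀ p ∈ Icc a b ×ˢ t, HasFDerivWithinAt (fun x => U (p.1, x)) (W p) t p.2) :
    ContDiffOn ℝ (n + 1) U (Icc a b ×ˢ t) :=
  contDiffOn_succ_of_partial (convex_Icc a b) (uniqueDiffOn_Icc hab) ht
    (fun p hp => (hU.hasDerivWithinAt p hp).hasFDerivWithinAt) hUW
    (contDiffOn_toSpanSingleton (contDiffOn_comp_graph hG hUn)) hW

-- `Y` lies in a universe containing that of `E →L[ℝ] Y`, so that the induction hypothesis applies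
-- to the linearized family.
theorem IsODEFamily.contDiffOn_succ {Y : Type max u v} [NormedAddCommGroup Y] [NormedSpace ℝ Y]
    [CompleteSpace Y] {G : (ℝ × E) × Y → Y} {G' : (ℝ × E) × Y → E × Y →L[ℝ] Y} {U : ℝ × E → Y}
    {n : ℕ} (hU : IsODEFamily a b t G U) (hab : a < b) (ht : Convex ℝ t) (htc : IsCompact t)
    (htd : UniqueDiffOn ℝ t) (hGs : HasSliceFDerivOn (Icc a b) t G G')
    (hG : ContDiffOn ℝ n G ((Icc a b ×ˢ t) ×ˢ univ))
    (hG' : ContDiffOn ℝ n G' ((Icc a b ×ˢ t) ×ˢ univ))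
    (hUa : ContDiffOn ℝ (n + 1) (fun x => U (a, x)) t) :
    ContDiffOn ℝ (n + 1) U (Icc a b ×ˢ t) := by
  induction n generalizing Y with
  | zero =>
    obtain ⟨W, hW, -, hUW⟩ := hU.exists_isODEFamily_linearizedField hab.le ht htc htd
      hGs hG'.continuousOn hUa
    exact hU.contDiffOn_succ_of_hasFDerivWithinAt hab htd hG (contDiffOn_zero.2 hU.continuousOn)
      (contDiffOn_zero.2 hW.continuousOn) hUW
  | succ n ih =>
    push_cast at hG hG' hUa ⊢
    obtain ⟨W, hW, hWa, hUW⟩ := hU.exists_isODEFamily_linearizedField hab.le ht htc htd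
      hGs hG'.continuousOn hUa
    have hUn : ContDiffOn ℝ (n + 1) U (Icc a b ×ˢ t) :=
      ih hU hGs (hG.of_le le_self_add) (hG'.of_le le_self_add) (hUa.of_le le_self_add)
    have hlin := contDiffOn_linearizedField hG' hUn
    obtain ⟨H, hHs, hH⟩ := exists_hasSliceFDerivOn_of_contDiffOn hlin (uniqueDiffOn_Icc hab) htd
    have hWn : ContDiffOn ℝ (n + 1) W (Icc a b ×ˢ t) :=
      ih hW hHs (hlin.of_le le_self_add) hH hWa
    exact hU.contDiffOn_succ_of_hasFDerivWithinAt hab htd hG hUn hWn hUW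

end Regularity

section TwoVariableSystem

variable {Y Yb : Type*} [NormedAddCommGroup Y] [NormedSpace ℝ Y]
  [NormedAddCommGroup Yb] [NormedSpace ℝ Yb] {us ubs : ℝ}
  {F : ℝ → ℝ → Y × Yb → Y} {Fb : ℝ → ℝ → Y × Yb → Yb} {U₀ : ℝ → Y} {Ub₀ : ℝ → Yb}
  {U : ℝ × ℝ → Y} {Ub : ℝ × ℝ → Yb} {n : ℕ}

lemma mapsTo_swap_Dset (us ubs : ℝ) : MapsTo Prod.swap (Dset us ubs) (Dset ubs us) :=
  fun _ hp => ⟨hp.2, hp.1⟩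

lemma contDiffOn_swap_Dset_prod_univ {Z : Type*} [NormedAddCommGroup Z] [NormedSpace ℝ Z]
    {n : WithTop ℕ∞} {H : ℝ → ℝ → Y × Yb → Z}
    (hH : ContDiffOn ℝ n (fun q : (ℝ × ℝ) × Y × Yb => H q.1.1 q.1.2 q.2) (Dset us ubs ×ˢ univ)) :
    ContDiffOn ℝ n (fun q : (ℝ × ℝ) × Yb × Y => H q.1.2 q.1.1 q.2.swap) (Dset ubs us ×ˢ univ) :=
  hH.comp (f := fun q : (ℝ × ℝ) × Yb × Y => (q.1.swap, q.2.swap))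
    (ContDiff.contDiffOn (by unfold Prod.swap; fun_prop)) fun _ hq => ⟨⟨hq.1.2, hq.1.1⟩, mem_univ _⟩

lemma IsSolution.swap (h : IsSolution us ubs F Fb U₀ Ub₀ U Ub) :
    IsSolution ubs us (fun u v x => Fb v u x.swap) (fun u v x => F v u x.swap) Ub₀ U₀
      (fun p => Ub p.swap) fun p => U p.swap := by
  obtain ⟨hU, hUb, hdU, hdUb, hU₀, hUb₀⟩ := h
  exact ⟨hUb.comp continuous_swap.continuousOn (mapsTo_swap_Dset ubs us),
    hU.comp continuous_swap.continuousOn (mapsTo_swap_Dset ubs us),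
    fun p hp => hdUb p.swap (mapsTo_swap_Dset ubs us hp),
    fun p hp => hdU p.swap (mapsTo_swap_Dset ubs us hp), hUb₀, hU₀⟩

lemma IsSolution.isODEFamily (h : IsSolution us ubs F Fb U₀ Ub₀ U Ub) :
    IsODEFamily 0 us (Icc 0 ubs) (fun q => F q.1.1 q.1.2 (q.2, Ub q.1)) U :=
  ⟨h.1, h.2.2.1⟩

theorem IsSolution.contDiffOn_succ_left [CompleteSpace Y]
    (h : IsSolution us ubs F Fb U₀ Ub₀ U Ub) (hus : 0 < us) (hubs : 0 < ubs)
    (hF : ContDiffOn ℝ (n + 1) (fun q : (ℝ × ℝ) × Y × Yb => F q.1.1 q.1.2 q.2)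
      (Dset us ubs ×ˢ univ))
    (hFb : ContDiffOn ℝ n (fun q : (ℝ × ℝ) × Y × Yb => Fb q.1.1 q.1.2 q.2)
      (Dset us ubs ×ˢ univ))
    (hU₀ : ContDiffOn ℝ (n + 1) U₀ (Icc 0 ubs))
    (hU : ContDiffOn ℝ n U (Dset us ubs)) (hUb : ContDiffOn ℝ n Ub (Dset us ubs)) :
    ContDiffOn ℝ (n + 1) U (Dset us ubs) := by
  have hfamily := h.isODEFamily
  obtain ⟨-, -, -, hdUb, hUinit, -⟩ := h
  obtain ⟨F', hF's, hF'⟩ := exists_hasSliceFDerivOn_of_contDiffOn hF (uniqueDiffOn_Icc hus)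
    (uniqueDiffOn_Icc hubs)
  have hgraph : ContDiffOn ℝ n (fun q : (ℝ × ℝ) × Y => (q.1, q.2, Ub q.1)) (Dset us ubs ×ˢ univ) :=
    contDiffOn_fst.prodMk (contDiffOn_snd.prodMk (hUb.comp contDiffOn_fst fun _ hq => hq.1))
  have hmaps : MapsTo (fun q : (ℝ × ℝ) × Y => (q.1, q.2, Ub q.1)) (Dset us ubs ×ˢ univ)
      (Dset us ubs ×ˢ univ) := fun _ hq => ⟨hq.1, mem_univ _⟩
  have hdUbn : ContDiffOn ℝ n (fun q : (ℝ × ℝ) × Y =>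
      ContinuousLinearMap.toSpanSingleton ℝ (Fb q.1.1 q.1.2 (U q.1, Ub q.1)))
      (Dset us ubs ×ˢ univ) :=
    contDiffOn_toSpanSingleton
      ((contDiffOn_comp_graph hFb (hU.prodMk hUb)).comp contDiffOn_fst fun _ hq => hq.1)
  refine hfamily.contDiffOn_succ hus (convex_Icc 0 ubs) isCompact_Icc (uniqueDiffOn_Icc hubs)
    (hF's.comp_prodMk fun p hp => (hdUb p hp).hasFDerivWithinAt)
    ((hF.of_le le_self_add).comp hgraph hmaps) ((hF'.comp hgraph hmaps).clm_comp ?_)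
    (hU₀.congr hUinit)
  exact contDiffOn_clm_prod contDiffOn_const
    (contDiffOn_clm_prod contDiffOn_const (hdUbn.clm_comp contDiffOn_const))

theorem IsSolution.contDiffOn_nat [CompleteSpace Y] [CompleteSpace Yb]
    (h : IsSolution us ubs F Fb U₀ Ub₀ U Ub) (hus : 0 < us) (hubs : 0 < ubs)
    (hF : ContDiffOn ℝ n (fun q : (ℝ × ℝ) × Y × Yb => F q.1.1 q.1.2 q.2)
      (Dset us ubs ×ˢ univ))
    (hFb : ContDiffOn ℝ n (fun q : (ℝ × ℝ) × Y × Yb => Fb q.1.1 q.1.2 q.2)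
      (Dset us ubs ×ˢ univ))
    (hU₀ : ContDiffOn ℝ n U₀ (Icc 0 ubs)) (hUb₀ : ContDiffOn ℝ n Ub₀ (Icc 0 us)) :
    ContDiffOn ℝ n U (Dset us ubs) ∧ ContDiffOn ℝ n Ub (Dset us ubs) := by
  induction n with
  | zero => exact ⟨contDiffOn_zero.2 h.1, contDiffOn_zero.2 h.2.1⟩
  | succ n ih =>
    push_cast at hF hFb hU₀ hUb₀ ⊢
    have hFn := hF.of_le le_self_add
    have hFbn := hFb.of_le le_self_add
    obtain ⟨hU, hUb⟩ := ih hFn hFbn (hU₀.of_le le_self_add) (hUb₀.of_le le_self_add)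
    refine ⟨h.contDiffOn_succ_left hus hubs hF hFbn hU₀ hU hUb, ?_⟩
    exact contDiffOn_comp_swap (h.swap.contDiffOn_succ_left hubs hus
      (contDiffOn_swap_Dset_prod_univ hFb) (contDiffOn_swap_Dset_prod_univ hFn) hUb₀
      (contDiffOn_comp_swap hUb) (contDiffOn_comp_swap hU))

end TwoVariableSystem

theorem stmt_5_general {Y Yb : Type*}
    [NormedAddCommGroup Y] [NormedSpace ℝ Y] [CompleteSpace Y]
    [NormedAddCommGroup Yb] [NormedSpace ℝ Yb] [CompleteSpace Yb]
    (us ubs : ℝ) (hus : 0 < us) (hubs : 0 < ubs) (k : ℕ∞)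
    (F : ℝ → ℝ → Y × Yb → Y) (Fb : ℝ → ℝ → Y × Yb → Yb)
    (hFk : ContDiffOn ℝ k (fun q : (ℝ × ℝ) × Y × Yb => F q.1.1 q.1.2 q.2)
      (Dset us ubs ×ˢ univ))
    (hFbk : ContDiffOn ℝ k (fun q : (ℝ × ℝ) × Y × Yb => Fb q.1.1 q.1.2 q.2)
      (Dset us ubs ×ˢ univ))
    (U₀ : ℝ → Y) (Ub₀ : ℝ → Yb)
    (hU₀ : ContDiffOn ℝ k U₀ (Set.Icc 0 ubs))
    (hUb₀ : ContDiffOn ℝ k Ub₀ (Set.Icc 0 us))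
    (U : ℝ × ℝ → Y) (Ub : ℝ × ℝ → Yb)
    (hsol : IsSolution us ubs F Fb U₀ Ub₀ U Ub) :
    ContDiffOn ℝ k U (Dset us ubs) ∧ ContDiffOn ℝ k Ub (Dset us ubs) ∧
    (∃ g : ℝ × ℝ → Y,
      (∀ p ∈ Dset us ubs, HasDerivWithinAt (fun t => U (t, p.2)) (g p) (Set.Icc 0 us) p.1) ∧
      ContDiffOn ℝ k g (Dset us ubs)) ∧
    (∃ gb : ℝ × ℝ → Yb,
      (∀ p ∈ Dset us ubs,
        HasDerivWithinAt (fun v => Ub (p.1, v)) (gb p) (Set.Icc 0 ubs) p.2) ∧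
      ContDiffOn ℝ k gb (Dset us ubs)) := by
  have hnat (n : ℕ) (hn : (n : ℕ∞) ≤ k) :
      ContDiffOn ℝ n U (Dset us ubs) ∧ ContDiffOn ℝ n Ub (Dset us ubs) := by
    have hn' : (n : WithTop ℕ∞) ≤ k := by exact_mod_cast hn
    exact hsol.contDiffOn_nat hus hubs (hFk.of_le hn') (hFbk.of_le hn') (hU₀.of_le hn')
      (hUb₀.of_le hn')
  have hU : ContDiffOn ℝ k U (Dset us ubs) :=
    contDiffOn_iff_forall_nat_le.2 fun n hn => (hnat n hn).1
  have hUb : ContDiffOn ℝ k Ub (Dset us ubs) :=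
    contDiffOn_iff_forall_nat_le.2 fun n hn => (hnat n hn).2
  obtain ⟨-, -, hdU, hdUb, -, -⟩ := hsol
  exact ⟨hU, hUb, ⟨_, hdU, contDiffOn_comp_graph hFk (hU.prodMk hUb)⟩,
    ⟨_, hdUb, contDiffOn_comp_graph hFbk (hU.prodMk hUb)⟩⟩

/-- Cᵏ regularity for two-variable ODE systems. Let `k ≥ 1`. If `F, F̄`
are continuous, uniformly Lipschitz in `𝕏`, and `k`-times continuously (Fréchet)
differentiable jointly in all variables, and `U₀ ∈ Cᵏ([0,ū_*];𝕐)`,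
`Ū₀ ∈ Cᵏ([0,u_*];𝕐̄)`, then the (unique) solution `(U,Ū)` of the two-variable ODE system
satisfies `(U,Ū) ∈ Cᵏ(D;𝕏)`, and moreover the maps `∂U/∂u : D → 𝕐` and
`∂Ū/∂ū : D → 𝕐̄` also belong to `Cᵏ(D;𝕐)` and `Cᵏ(D;𝕐̄)` respectively. -/
theorem stmt_5 {Y Yb : Type*}
    [NormedAddCommGroup Y] [NormedSpace ℝ Y] [CompleteSpace Y]
    [NormedAddCommGroup Yb] [NormedSpace ℝ Yb] [CompleteSpace Yb]
    (us ubs : ℝ) (hus : 0 < us) (hubs : 0 < ubs)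
    (k : ℕ) (hk : 1 ≤ k)
    (F : ℝ → ℝ → Y × Yb → Y) (Fb : ℝ → ℝ → Y × Yb → Yb)
    (hFc : ContinuousOn (fun q : (ℝ × ℝ) × Y × Yb => F q.1.1 q.1.2 q.2)
      (Dset us ubs ×ˢ univ))
    (hFbc : ContinuousOn (fun q : (ℝ × ℝ) × Y × Yb => Fb q.1.1 q.1.2 q.2)
      (Dset us ubs ×ˢ univ))
    (M : ℝ) (hM : 0 ≤ M)
    (hFlip : ∀ p ∈ Dset us ubs, ∀ x₁ x₂ : Y × Yb,
      ‖F p.1 p.2 x₁ - F p.1 p.2 x₂‖ ≤ M * ‖x₁ - x₂‖)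
    (hFblip : ∀ p ∈ Dset us ubs, ∀ x₁ x₂ : Y × Yb,
      ‖Fb p.1 p.2 x₁ - Fb p.1 p.2 x₂‖ ≤ M * ‖x₁ - x₂‖)
    (hFk : ContDiffOn ℝ k (fun q : (ℝ × ℝ) × Y × Yb => F q.1.1 q.1.2 q.2)
      (Dset us ubs ×ˢ univ))
    (hFbk : ContDiffOn ℝ k (fun q : (ℝ × ℝ) × Y × Yb => Fb q.1.1 q.1.2 q.2)
      (Dset us ubs ×ˢ univ))
    (U₀ : ℝ → Y) (Ub₀ : ℝ → Yb)
    (hU₀ : ContDiffOn ℝ k U₀ (Set.Icc 0 ubs))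
    (hUb₀ : ContDiffOn ℝ k Ub₀ (Set.Icc 0 us))
    (U : ℝ × ℝ → Y) (Ub : ℝ × ℝ → Yb)
    (hsol : IsSolution us ubs F Fb U₀ Ub₀ U Ub) :
    ContDiffOn ℝ k U (Dset us ubs) ∧ ContDiffOn ℝ k Ub (Dset us ubs) ∧
    (∃ g : ℝ × ℝ → Y,
      (∀ p ∈ Dset us ubs, HasDerivWithinAt (fun t => U (t, p.2)) (g p) (Set.Icc 0 us) p.1) ∧
      ContDiffOn ℝ k g (Dset us ubs)) ∧
    (∃ gb : ℝ × ℝ → Yb,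
      (∀ p ∈ Dset us ubs,
        HasDerivWithinAt (fun v => Ub (p.1, v)) (gb p) (Set.Icc 0 ubs) p.2) ∧
      ContDiffOn ℝ k gb (Dset us ubs)) :=
  stmt_5_general us ubs hus hubs k F Fb hFk hFbk U₀ Ub₀ hU₀ hUb₀ U Ub hsol
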